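/- Let Ω be a program with weight constraints, Z a consistent set of literals, and Π₁ the set of rules l ← not not l, [C₁],…,[C_n] for every rule C₀ ← C₁,…,C_n of Ω and every positive rule element l of C₀. If the deductive closure cl(Ω^Z) is consistent, then it is the unique answer set for Π₁^Z; if cl(Ω^Z) is inconsistent, then Π₁^Z has no answer sets. -/

import Mathlib

open Classical

/-- A literal: a propositional atom `a` or its classical negation `¬ a`. -/
inductive Lit (α : Type) where
  | pos : α → Lit α
  | neg : α → Lit α

/-- The atom of a literal. -/
def Lit.atom {α : Type} : Lit α → α
  | .pos a => a
  | .neg a => a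

/-- Mapping literals along a map of atoms. -/
def Lit.map {α β : Type} (f : α → β) : Lit α → Lit β
  | .pos a => .pos (f a)
  | .neg a => .neg (f a)

/-- A set of literals is consistent if it contains no pair `a`, `¬ a`. -/
def LitConsistent {α : Type} (Z : Set (Lit α)) : Prop :=
  ∀ a : α, ¬(Lit.pos a ∈ Z ∧ Lit.neg a ∈ Z)

/-- Formulas (nested expressions): elementary formulas are literals, `⊥` and `⊤`;
formulas are built from them using negation as failure `naf`, conjunction `conj`
and disjunction `disj`. -/
inductive Formula (α : Type) where
  | lit : Lit α → Formula α
  | fbot : Formula α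
  | ftop : Formula α
  | naf : Formula α → Formula α
  | conj : Formula α → Formula α → Formula α
  | disj : Formula α → Formula α → Formula α

/-- Satisfaction of a formula by a set of literals. -/
def Formula.sat {α : Type} (Z : Set (Lit α)) : Formula α → Prop
  | .lit l => l ∈ Z
  | .fbot => False
  | .ftop => True
  | .naf F => ¬ F.sat Z
  | .conj F G => F.sat Z ∧ G.sat Z
  | .disj F G => F.sat Z ∨ G.sat Z

/-- A rule with nested expressions: `head ← body`. -/
structure NRule (α : Type) where
  head : Formula α
  body : Formula α

/-- `Z` satisfies a program (a set of rules). -/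
def progSat {α : Type} (Z : Set (Lit α)) (P : Set (NRule α)) : Prop :=
  ∀ r ∈ P, r.body.sat Z → r.head.sat Z

/-- The reduct `F^Z` of a formula relative to a set of literals `Z`. -/
noncomputable def Formula.reduct {α : Type} (Z : Set (Lit α)) : Formula α → Formula α
  | .lit l => .lit l
  | .fbot => .fbot
  | .ftop => .ftop
  | .naf F => if F.sat Z then .fbot else .ftop
  | .conj F G => .conj (F.reduct Z) (G.reduct Z)
  | .disj F G => .disj (F.reduct Z) (G.reduct Z)

/-- The reduct `Π^Z` of a program. -/
noncomputable def progReduct {α : Type} (Z : Set (Lit α)) (P : Set (NRule α)) : Set (NRule α) :=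
  (fun r : NRule α => NRule.mk (r.head.reduct Z) (r.body.reduct Z)) '' P

/-- `Z` is minimal (under inclusion) among the consistent sets of literals satisfying `P`. -/
def MinimalSat {α : Type} (Z : Set (Lit α)) (P : Set (NRule α)) : Prop :=
  LitConsistent Z ∧ progSat Z P ∧
    ∀ Z' : Set (Lit α), LitConsistent Z' → progSat Z' P → Z' ⊆ Z → Z' = Z

/-- `Z` is an answer set for a program `P` with nested expressions:
`Z` is minimal among the consistent sets satisfying the reduct `P^Z`. -/
def AnswerSet {α : Type} (Z : Set (Lit α)) (P : Set (NRule α)) : Prop :=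
  MinimalSat Z (progReduct Z P)

/-- Strong equivalence of programs with nested expressions. -/
def StrongEq {α : Type} (P₁ P₂ : Set (NRule α)) : Prop :=
  ∀ P : Set (NRule α), ∀ Z : Set (Lit α), AnswerSet Z (P₁ ∪ P) ↔ AnswerSet Z (P₂ ∪ P)

/-- Multiple conjunction (the empty conjunction is `⊤`). -/
def bigConj {α : Type} : List (Formula α) → Formula α
  | [] => .ftop
  | F :: Fs => .conj F (bigConj Fs)

/-- Multiple disjunction (the empty disjunction is `⊥`). -/
def bigDisj {α : Type} : List (Formula α) → Formula α
  | [] => .fbot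
  | F :: Fs => .disj F (bigDisj Fs)

/-- `⟨F₁,…,F_n⟩:X`: the disjunction over `I ∈ X` of the conjunctions of the `Fᵢ`, `i ∈ I`. -/
noncomputable def angled {α : Type} {n : ℕ} (F : Fin n → Formula α) (X : Finset (Finset (Fin n))) :
    Formula α :=
  bigDisj (X.toList.map fun I => bigConj (I.toList.map F))
/-- A rule element: a literal (positive rule element) or a literal
prefixed with negation as failure (negative rule element). -/
inductive RElem (α : Type) where
  | pos : Lit α → RElem α
  | neg : Lit α → RElem α

/-- Satisfaction of a rule element by a set of literals. -/
def RElem.sat {α : Type} (Z : Set (Lit α)) : RElem α → Prop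
  | .pos l => l ∈ Z
  | .neg l => l ∉ Z

/-- Whether a rule element is negative. -/
def RElem.isNegB {α : Type} : RElem α → Bool
  | .pos _ => false
  | .neg _ => true

/-- The sum of the weights of the entries of `S` that are satisfied by `Z`. -/
noncomputable def weightSum {α : Type} (Z : Set (Lit α)) (S : List (RElem α × ℝ)) : ℝ :=
  (S.map fun p => if p.1.sat Z then p.2 else 0).sum

/-- A weight constraint `L ≤ {c₁=w₁,…,c_m=w_m} ≤ U` with nonnegative weights;
`L` and `U` may be `−∞`/`+∞`. -/
structure WConstraint (α : Type) where
  L : EReal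
  S : List (RElem α × ℝ)
  U : EReal
  nonneg : ∀ p ∈ S, (0 : ℝ) ≤ p.2

/-- `Z` satisfies the weight constraint `L ≤ S ≤ U`. -/
def WConstraint.sat {α : Type} (Z : Set (Lit α)) (C : WConstraint α) : Prop :=
  C.L ≤ (weightSum Z C.S : EReal) ∧ (weightSum Z C.S : EReal) ≤ C.U

/-- A rule with weight constraints, `C₀ ← C₁,…,C_n`. -/
structure WRule (α : Type) where
  head : WConstraint α
  body : List (WConstraint α)

/-- `Z` satisfies a program with weight constraints. -/
def wProgSat {α : Type} (Z : Set (Lit α)) (Ω : Set (WRule α)) : Prop :=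
  ∀ R ∈ Ω, (∀ C ∈ R.body, C.sat Z) → R.head.sat Z

/-- A weight constraint of the form `L ≤ S` (no upper bound), with nonnegative weights. -/
structure LConstraint (α : Type) where
  L : EReal
  S : List (RElem α × ℝ)
  nonneg : ∀ p ∈ S, (0 : ℝ) ≤ p.2

/-- Satisfaction of a lower-bound constraint (by an arbitrary set of literals). -/
def LConstraint.sat {α : Type} (Z : Set (Lit α)) (C : LConstraint α) : Prop :=
  C.L ≤ (weightSum Z C.S : EReal)

/-- A Horn rule: a literal as head, lower-bound constraints as body. -/
structure HornRule (α : Type) where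
  head : Lit α
  body : List (LConstraint α)

/-- Satisfaction of a set of Horn rules by an arbitrary set of literals. -/
def hornSat {α : Type} (Z : Set (Lit α)) (P : Set (HornRule α)) : Prop :=
  ∀ r ∈ P, (∀ C ∈ r.body, C.sat Z) → r.head ∈ Z

/-- The deductive closure of a set of Horn rules: its unique minimal satisfying
set of literals (the intersection of all satisfying sets). -/
def cl {α : Type} (P : Set (HornRule α)) : Set (Lit α) :=
  ⋂₀ {Z : Set (Lit α) | hornSat Z P}

/-- The sum of the weights of the negative entries of `S` satisfied by `Z`. -/
noncomputable def negSatWeight {α : Type} (Z : Set (Lit α)) (S : List (RElem α × ℝ)) : ℝ :=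
  (S.map fun p => if p.1.isNegB = true ∧ p.1.sat Z then p.2 else 0).sum

/-- The reduct `(L ≤ S)^Z` of a lower-bound constraint: drop the negative entries
of `S` and decrease `L` by the total weight of the negative entries satisfied by `Z`. -/
noncomputable def LConstraint.reduct {α : Type} (Z : Set (Lit α)) (C : LConstraint α) :
    LConstraint α :=
  ⟨C.L - ((negSatWeight Z C.S : ℝ) : EReal),
   C.S.filter (fun p => !p.1.isNegB),
   fun p hp => C.nonneg p (List.mem_of_mem_filter hp)⟩

/-- The lower-bound part `L ≤ S` of a weight constraint `L ≤ S ≤ U`. -/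
def WConstraint.lower {α : Type} (C : WConstraint α) : LConstraint α :=
  ⟨C.L, C.S, C.nonneg⟩

/-- The positive rule elements (as literals) occurring in `S`. -/
def posElems {α : Type} (S : List (RElem α × ℝ)) : Set (Lit α) :=
  {l : Lit α | ∃ w : ℝ, (RElem.pos l, w) ∈ S}

/-- The reduct `Ω^Z` of a program with weight constraints: for each rule
`L₀≤S₀≤U₀ ← C₁,…,C_n` whose upper bounds are all satisfied by `Z`, the Horn rules
`l ← C₁^Z,…,C_n^Z` for all positive rule elements `l` of `S₀` with `l ∈ Z`. -/
noncomputable def wProgReduct {α : Type} (Z : Set (Lit α)) (Ω : Set (WRule α)) :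
    Set (HornRule α) :=
  { r : HornRule α | ∃ R ∈ Ω,
      (∀ C ∈ R.body, (weightSum Z C.S : EReal) ≤ C.U) ∧
      r.head ∈ posElems R.head.S ∧ r.head ∈ Z ∧
      r.body = R.body.map (fun C => C.lower.reduct Z) }

/-- `Z` is an answer set for the program `Ω` with weight constraints. -/
def WAnswerSet {α : Type} (Z : Set (Lit α)) (Ω : Set (WRule α)) : Prop :=
  LitConsistent Z ∧ wProgSat Z Ω ∧ cl (wProgReduct Z Ω) = Z

/-- Strong equivalence of programs with weight constraints. -/
def WStrongEq {α : Type} (Ω₁ Ω₂ : Set (WRule α)) : Prop :=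
  ∀ Ω : Set (WRule α), ∀ Z : Set (Lit α), WAnswerSet Z (Ω₁ ∪ Ω) ↔ WAnswerSet Z (Ω₂ ∪ Ω)

/-- A rule element as a formula: `l` becomes the literal `l`, `not l` becomes `naf l`. -/
def RElem.toFormula {α : Type} : RElem α → Formula α
  | .pos l => .lit l
  | .neg l => .naf (.lit l)

/-- The translation `[L ≤ S]`: the formula `⟨c₁,…,c_m⟩:{I : L ≤ Σ_{i∈I} wᵢ}`. -/
noncomputable def trLower {α : Type} (L : EReal) (S : List (RElem α × ℝ)) : Formula α :=
  angled (fun i : Fin S.length => (S.get i).1.toFormula)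
    (Finset.univ.filter fun I : Finset (Fin S.length) =>
      L ≤ ((∑ i ∈ I, (S.get i).2 : ℝ) : EReal))

/-- The translation `[S ≤ U]`: the formula `not ⟨c₁,…,c_m⟩:{I : U < Σ_{i∈I} wᵢ}`. -/
noncomputable def trUpper {α : Type} (S : List (RElem α × ℝ)) (U : EReal) : Formula α :=
  .naf (angled (fun i : Fin S.length => (S.get i).1.toFormula)
    (Finset.univ.filter fun I : Finset (Fin S.length) =>
      U < ((∑ i ∈ I, (S.get i).2 : ℝ) : EReal)))

/-- The translation `[L ≤ S ≤ U] = [L ≤ S],[S ≤ U]`. -/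
noncomputable def trWC {α : Type} (C : WConstraint α) : Formula α :=
  .conj (trLower C.L C.S) (trUpper C.S C.U)

/-- The formulas `l ; not l` for the positive rule elements `l` of `S`, in order. -/
def choiceFmls {α : Type} (S : List (RElem α × ℝ)) : List (Formula α) :=
  S.filterMap fun p =>
    match p.1 with
    | RElem.pos l => some (Formula.disj (.lit l) (.naf (.lit l)))
    | RElem.neg _ => none

/-- The translation of a rule with weight constraints `C₀ ← C₁,…,C_n`:
`(l₁; not l₁),…,(l_p; not l_p),[C₀] ← [C₁],…,[C_n]`. -/
noncomputable def trRule {α : Type} (R : WRule α) : NRule α :=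
  ⟨bigConj (choiceFmls R.head.S ++ [trWC R.head]), bigConj (R.body.map trWC)⟩

/-- The translation `[Ω]` of a program with weight constraints. -/
noncomputable def trProg {α : Type} (Ω : Set (WRule α)) : Set (NRule α) :=
  trRule '' Ω

/-- The nondisjunctive translation `[Ω]^{nd}`: each rule `C₀ ← C₁,…,C_n` is replaced
by the rules `l ← not not l, [C₁],…,[C_n]` for all positive rule elements `l` of `C₀`
together with `⊥ ← not [C₀], [C₁],…,[C_n]`. -/
noncomputable def ndTrans {α : Type} (Ω : Set (WRule α)) : Set (NRule α) :=
  { r : NRule α | ∃ R ∈ Ω,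
      (∃ l ∈ posElems R.head.S,
        r = ⟨.lit l, bigConj (.naf (.naf (.lit l)) :: R.body.map trWC)⟩) ∨
      r = ⟨.fbot, bigConj (.naf (trWC R.head) :: R.body.map trWC)⟩ }

/-- `Π₁`: the rules `l ← not not l, [C₁],…,[C_n]` for all rules `C₀ ← C₁,…,C_n` of `Ω`
and all positive rule elements `l` of `C₀`. -/
noncomputable def choicePart {α : Type} (Ω : Set (WRule α)) : Set (NRule α) :=
  { r : NRule α | ∃ R ∈ Ω, ∃ l ∈ posElems R.head.S,
      r = ⟨.lit l, bigConj (.naf (.naf (.lit l)) :: R.body.map trWC)⟩ }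

/-!
Taking the reduct relative to `Z` removes negation as failure altogether, so a second reduct changes
nothing and the answer sets for `Π₁^Z` are its minimal consistent models. The models of `Π₁^Z` are
exactly those of the Horn program `Ω^Z`: since weights are nonnegative, some index set `I` of
satisfied entries has a weight in a given upper set if and only if the set of all satisfied entries
does, which turns `[C]^Z` into `C^Z` together with the upper bound evaluated at `Z`. Constraints
without negative rule elements are monotone, so `Ω^Z` has a least model, namely `cl(Ω^Z)`, and the
least model is the only candidate for a minimal consistent one.
-/

section MinimalModels

variable {α : Type}

theorem LitConsistent.mono {X Y : Set (Lit α)} (hY : LitConsistent Y) (h : X ⊆ Y) :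
    LitConsistent X :=
  fun a ha => hY a ⟨h ha.1, h ha.2⟩

theorem minimalSat_iff_of_isLeast {P : Set (NRule α)} {M Y : Set (Lit α)}
    (hM : IsLeast {X | progSat X P} M) : MinimalSat Y P ↔ LitConsistent M ∧ Y = M := by
  constructor
  · rintro ⟨hY, hsat, hmin⟩
    have hMY : M ⊆ Y := hM.2 hsat
    have hMcons : LitConsistent M := hY.mono hMY
    exact ⟨hMcons, (hmin M hMcons hM.1 hMY).symm⟩
  · rintro ⟨hcons, rfl⟩
    exact ⟨hcons, hM.1, fun X _ hX hXY => hXY.antisymm (hM.2 hX)⟩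

end MinimalModels

section Reducts

variable {α : Type} (Y Z : Set (Lit α))

theorem Formula.reduct_reduct (F : Formula α) : (F.reduct Z).reduct Y = F.reduct Z := by
  induction F with
  | lit | fbot | ftop => rfl
  | naf F =>
    rw [Formula.reduct]
    split_ifs <;> rfl
  | conj F G hF hG => simp only [Formula.reduct, hF, hG]
  | disj F G hF hG => simp only [Formula.reduct, hF, hG]

theorem progReduct_progReduct (P : Set (NRule α)) :
    progReduct Y (progReduct Z P) = progReduct Z P := by
  simp only [progReduct, Set.image_image, Formula.reduct_reduct]

theorem answerSet_progReduct_iff (P : Set (NRule α)) :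
    AnswerSet Y (progReduct Z P) ↔ MinimalSat Y (progReduct Z P) := by
  rw [AnswerSet, progReduct_progReduct]

theorem Formula.sat_reduct_naf (F : Formula α) :
    ((Formula.naf F).reduct Z).sat Y ↔ ¬ F.sat Z := by
  rw [Formula.reduct]
  split_ifs with h <;> simp [Formula.sat, h]

theorem sat_bigConj (Fs : List (Formula α)) : (bigConj Fs).sat Y ↔ ∀ F ∈ Fs, F.sat Y := by
  induction Fs with
  | nil => simp [bigConj, Formula.sat]
  | cons F Fs ih => simp [bigConj, Formula.sat, ih]

theorem sat_bigDisj (Fs : List (Formula α)) : (bigDisj Fs).sat Y ↔ ∃ F ∈ Fs, F.sat Y := by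
  induction Fs with
  | nil => simp [bigDisj, Formula.sat]
  | cons F Fs ih => simp [bigDisj, Formula.sat, ih]

theorem reduct_bigConj (Fs : List (Formula α)) :
    (bigConj Fs).reduct Z = bigConj (Fs.map (Formula.reduct Z)) := by
  induction Fs with
  | nil => rfl
  | cons F Fs ih => simp only [bigConj, Formula.reduct, List.map_cons, ih]

theorem reduct_bigDisj (Fs : List (Formula α)) :
    (bigDisj Fs).reduct Z = bigDisj (Fs.map (Formula.reduct Z)) := by
  induction Fs with
  | nil => rfl
  | cons F Fs ih => simp only [bigDisj, Formula.reduct, List.map_cons, ih]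

theorem sat_angled {n : ℕ} (F : Fin n → Formula α) (X : Finset (Finset (Fin n))) :
    (angled F X).sat Y ↔ ∃ I ∈ X, ∀ i ∈ I, (F i).sat Y := by
  simp [angled, sat_bigDisj, sat_bigConj]

theorem reduct_angled {n : ℕ} (F : Fin n → Formula α) (X : Finset (Finset (Fin n))) :
    (angled F X).reduct Z = angled (fun i => (F i).reduct Z) X := by
  simp [angled, reduct_bigDisj, reduct_bigConj, Function.comp_def]

end Reducts

section Weights

theorem exists_sum_mem_iff_of_isUpperSet {ι M : Type*} [Fintype ι] [AddCommMonoid M]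
    [PartialOrder M] [IsOrderedAddMonoid M] {w : ι → M} (hw : ∀ i, 0 ≤ w i) (s : ι → Prop)
    [DecidablePred s] {A : Set M} (hA : IsUpperSet A) :
    (∃ I : Finset ι, ∑ i ∈ I, w i ∈ A ∧ ∀ i ∈ I, s i) ↔ (∑ i, if s i then w i else 0) ∈ A := by
  rw [← Finset.sum_filter]
  constructor
  · rintro ⟨I, hIA, hIs⟩
    have hsub : I ⊆ Finset.univ.filter s := fun i hi => by simpa using hIs i hi
    exact hA (Finset.sum_le_sum_of_subset_of_nonneg hsub fun i _ _ => hw i) hIA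
  · exact fun h => ⟨Finset.univ.filter s, h, by simp⟩

variable {α : Type} (Y Z : Set (Lit α))

theorem sat_angled_iff_sum_mem {S : List (RElem α × ℝ)} (hS : ∀ p ∈ S, (0 : ℝ) ≤ p.2)
    (f : RElem α → Formula α) {A : Set ℝ} (hA : IsUpperSet A)
    {X : Finset (Finset (Fin S.length))} (hX : ∀ I, I ∈ X ↔ ∑ i ∈ I, (S.get i).2 ∈ A) :
    (angled (fun i => f (S.get i).1) X).sat Y ↔
      (S.map fun p => if (f p.1).sat Y then p.2 else 0).sum ∈ A := by
  have hw : ∀ i, 0 ≤ (S.get i).2 := fun i => hS _ (S.get_mem i)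
  simp only [sat_angled, hX]
  rw [exists_sum_mem_iff_of_isUpperSet hw (fun i => (f (S.get i).1).sat Y) hA,
    ← Fin.sum_univ_fun_getElem]
  rfl

theorem RElem.sat_toFormula (c : RElem α) : c.toFormula.sat Y ↔ c.sat Y := by
  cases c <;> rfl

theorem RElem.sat_reduct_toFormula (c : RElem α) :
    (c.toFormula.reduct Z).sat Y ↔ if c.isNegB then c.sat Z else c.sat Y := by
  cases c with
  | pos l => simp [RElem.toFormula, RElem.isNegB, Formula.reduct, Formula.sat, RElem.sat]
  | neg l => simp [RElem.toFormula, RElem.isNegB, Formula.sat_reduct_naf, Formula.sat, RElem.sat]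

theorem sum_sat_reduct_toFormula (S : List (RElem α × ℝ)) :
    (S.map fun p => if (p.1.toFormula.reduct Z).sat Y then p.2 else 0).sum =
      weightSum Y (S.filter fun p => !p.1.isNegB) + negSatWeight Z S := by
  simp only [RElem.sat_reduct_toFormula, weightSum, negSatWeight]
  induction S with
  | nil => simp
  | cons p S ih =>
    cases h : p.1.isNegB <;> simp [h, ih, add_assoc, add_left_comm]

theorem sat_reduct_trLower (C : WConstraint α) :
    ((trLower C.L C.S).reduct Z).sat Y ↔ (C.lower.reduct Z).sat Y := by
  have hA : IsUpperSet {x : ℝ | C.L ≤ x} :=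
    fun _ _ hxy hx => le_trans hx (EReal.coe_le_coe_iff.2 hxy)
  rw [trLower, reduct_angled,
    sat_angled_iff_sum_mem Y C.nonneg (fun c => c.toFormula.reduct Z) hA (by simp),
    sum_sat_reduct_toFormula, Set.mem_ofPred_eq, EReal.coe_add]
  exact (EReal.sub_le_iff_le_add (by simp) (by simp)).symm

theorem sat_reduct_trUpper {S : List (RElem α × ℝ)} (hS : ∀ p ∈ S, (0 : ℝ) ≤ p.2) (U : EReal) :
    ((trUpper S U).reduct Z).sat Y ↔ (weightSum Z S : EReal) ≤ U := by
  have hA : IsUpperSet {x : ℝ | U < x} :=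
    fun _ _ hxy hx => lt_of_lt_of_le hx (EReal.coe_le_coe_iff.2 hxy)
  rw [trUpper, Formula.sat_reduct_naf, sat_angled_iff_sum_mem Z hS RElem.toFormula hA (by simp)]
  simp only [RElem.sat_toFormula, Set.mem_ofPred_eq, not_lt, weightSum]

theorem sat_reduct_trWC (C : WConstraint α) :
    ((trWC C).reduct Z).sat Y ↔
      (C.lower.reduct Z).sat Y ∧ (weightSum Z C.S : EReal) ≤ C.U :=
  and_congr (sat_reduct_trLower Y Z C) (sat_reduct_trUpper Y Z C.nonneg C.U)

end Weights

section HornPrograms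

variable {α : Type}

/-- A lower-bound constraint without negative rule elements, as the bodies of Horn rules require;
the type `HornRule` does not enforce this. -/
def LConstraint.NegFree (C : LConstraint α) : Prop :=
  ∀ p ∈ C.S, p.1.isNegB = false

theorem LConstraint.negFree_reduct (Z : Set (Lit α)) (C : LConstraint α) :
    (C.reduct Z).NegFree := by
  simp [LConstraint.NegFree, LConstraint.reduct]

theorem RElem.sat_mono {c : RElem α} (hc : c.isNegB = false) {X Y : Set (Lit α)} (h : X ⊆ Y)
    (hX : c.sat X) : c.sat Y := by
  cases c with
  | pos l => exact h hX
  | neg l => cases hc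

theorem LConstraint.NegFree.sat_mono {C : LConstraint α} (hC : C.NegFree) {X Y : Set (Lit α)}
    (h : X ⊆ Y) (hX : C.sat X) : C.sat Y := by
  have hle : weightSum X C.S ≤ weightSum Y C.S := by
    refine List.sum_le_sum fun p hp => ?_
    have hsat : p.1.sat X → p.1.sat Y := RElem.sat_mono (hC p hp) h
    have hw : 0 ≤ p.2 := C.nonneg p hp
    split_ifs with hpX hpY hpY
    · exact le_rfl
    · exact absurd (hsat hpX) hpY
    · exact hw
    · exact le_rfl
  exact le_trans hX (EReal.coe_le_coe_iff.2 hle)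

theorem isLeast_cl {P : Set (HornRule α)} (hP : ∀ r ∈ P, ∀ C ∈ r.body, C.NegFree) :
    IsLeast {X | hornSat X P} (cl P) := by
  have hlower : ∀ X, hornSat X P → cl P ⊆ X := fun X hX => Set.sInter_subset_of_mem hX
  refine ⟨fun r hr hbody X hX => hX r hr fun C hC => ?_, hlower⟩
  exact (hP r hr C hC).sat_mono (hlower X hX) (hbody C hC)

theorem isLeast_cl_wProgReduct (Z : Set (Lit α)) (Ω : Set (WRule α)) :
    IsLeast {X | hornSat X (wProgReduct Z Ω)} (cl (wProgReduct Z Ω)) := by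
  refine isLeast_cl ?_
  rintro ⟨l, body⟩ ⟨R, -, -, -, -, rfl : body = _⟩ C hC
  obtain ⟨D, -, rfl⟩ := List.mem_map.1 hC
  exact D.lower.negFree_reduct Z

end HornPrograms

section ChoicePart

variable {α : Type} (Y Z : Set (Lit α))

theorem sat_reduct_choiceBody (l : Lit α) (Cs : List (WConstraint α)) :
    ((bigConj (.naf (.naf (.lit l)) :: Cs.map trWC)).reduct Z).sat Y ↔
      l ∈ Z ∧ (∀ C ∈ Cs, (weightSum Z C.S : EReal) ≤ C.U) ∧
        ∀ D ∈ Cs.map fun C => C.lower.reduct Z, D.sat Y := by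
  simp only [reduct_bigConj, sat_bigConj, List.map_cons, List.map_map, List.forall_mem_cons,
    List.forall_mem_map, Function.comp_apply, Formula.sat_reduct_naf, sat_reduct_trWC,
    Formula.sat, not_not, forall₂_and, and_comm]

theorem progSat_progReduct_choicePart_iff (Ω : Set (WRule α)) :
    progSat Y (progReduct Z (choicePart Ω)) ↔ hornSat Y (wProgReduct Z Ω) := by
  constructor
  · rintro h ⟨l, body⟩ ⟨R, hR, hupper, hl, hlZ, rfl : body = _⟩ hbody
    exact h _ ⟨_, ⟨R, hR, l, hl, rfl⟩, rfl⟩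
      ((sat_reduct_choiceBody Y Z l R.body).2 ⟨hlZ, hupper, hbody⟩)
  · rintro h _ ⟨_, ⟨R, hR, l, hl, rfl⟩, rfl⟩ hbody
    obtain ⟨hlZ, hupper, hlower⟩ := (sat_reduct_choiceBody Y Z l R.body).1 hbody
    exact h ⟨l, _⟩ ⟨R, hR, hupper, hl, hlZ, rfl⟩ hlower

end ChoicePart

theorem closure_unique_answer_set_general {α : Type} (Ω : Set (WRule α)) (Y Z : Set (Lit α)) :
    AnswerSet Y (progReduct Z (choicePart Ω)) ↔
      LitConsistent (cl (wProgReduct Z Ω)) ∧ Y = cl (wProgReduct Z Ω) := by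
  have hleast : IsLeast {X | progSat X (progReduct Z (choicePart Ω))} (cl (wProgReduct Z Ω)) := by
    simpa only [progSat_progReduct_choicePart_iff] using isLeast_cl_wProgReduct Z Ω
  rw [answerSet_progReduct_iff, minimalSat_iff_of_isLeast hleast]

/-- If `cl(Ω^Z)` is consistent then it is the unique answer set for `Π₁^Z`;
otherwise `Π₁^Z` has no answer sets. -/
theorem closure_unique_answer_set (Ω : Set (WRule ℕ)) (Z : Set (Lit ℕ))
    (hZ : LitConsistent Z) :
    (LitConsistent (cl (wProgReduct Z Ω)) →
      ∀ Y : Set (Lit ℕ),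
        AnswerSet Y (progReduct Z (choicePart Ω)) ↔ Y = cl (wProgReduct Z Ω)) ∧
    (¬ LitConsistent (cl (wProgReduct Z Ω)) →
      ∀ Y : Set (Lit ℕ), ¬ AnswerSet Y (progReduct Z (choicePart Ω))) :=
  ⟨fun hc Y => (closure_unique_answer_set_general Ω Y Z).trans (and_iff_right hc),
    fun hc Y hY => hc ((closure_unique_answer_set_general Ω Y Z).1 hY).1⟩
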